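/- arXiv:0707.0917 — 6 statements merged into one kernel-verified Lean document; each statement's English description precedes it below -/
import Mathlib

section
/- Let σ ⊆ E be a convex cone, V ⊆ E a finite nonempty set, Δ = convexHull(V) + σ, and let δ ⊆ ℝ × E be the homogenization of Δ. Then for every pair (r,u) ∈ ℝ × E, we have (r,u) ∈ δ* if and only if u ∈ σ* and r + ⟪u,v⟫ ≥ 0 for all v ∈ Δ. -/
open scoped RealInnerProductSpace Pointwise

/-- A convex cone: contains `0`, and is closed under addition and under
multiplication by nonnegative real scalars. -/
def IsConvexCone {E : Type*} [AddCommMonoid E] [Module ℝ E] (σ : Set E) : Prop :=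
  (0 : E) ∈ σ ∧ (∀ x ∈ σ, ∀ y ∈ σ, x + y ∈ σ) ∧ ∀ c : ℝ, 0 ≤ c → ∀ x ∈ σ, c • x ∈ σ

/-- The convex cone generated by a set `T`: the set of all finite nonnegative
linear combinations of elements of `T`. -/
def coneGen {E : Type*} [AddCommMonoid E] [Module ℝ E] (T : Set E) : Set E :=
  {x | ∃ (n : ℕ) (c : Fin n → ℝ) (v : Fin n → E),
    (∀ i, 0 ≤ c i) ∧ (∀ i, v i ∈ T) ∧ x = ∑ i, c i • v i}

/-- The dual cone of a set in a real inner product space: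
`S* = {u | ⟪u,v⟫ ≥ 0 for all v ∈ S}`. -/
def dualCone {E : Type*} [NormedAddCommGroup E] [InnerProductSpace ℝ E] (S : Set E) : Set E :=
  {u | ∀ v ∈ S, 0 ≤ ⟪u, v⟫}

/-- The dual cone of a set in `ℝ × E`, with respect to the inner product
`⟪(r,u),(k,v)⟫ = r·k + ⟪u,v⟫`. -/
def dualConeProd {E : Type*} [NormedAddCommGroup E] [InnerProductSpace ℝ E]
    (S : Set (ℝ × E)) : Set (ℝ × E) :=
  {p | ∀ q ∈ S, 0 ≤ p.1 * q.1 + ⟪p.2, q.2⟫}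

/-- The homogenization of a polyhedron `Δ` with tail cone `σ`: the convex cone
in `ℝ × E` generated by `({0} × σ) ∪ ({1} × Δ)`. -/
def homog {E : Type*} [AddCommMonoid E] [Module ℝ E] (σ Δ : Set E) : Set (ℝ × E) :=
  coneGen ((({0} : Set ℝ) ×ˢ σ) ∪ (({1} : Set ℝ) ×ˢ Δ))

/-- `(r,u) ∈ δ*` iff `u ∈ σ*` and `r + ⟪u,v⟫ ≥ 0` for all `v ∈ Δ`. -/
theorem dual_of_homogenization
    {E : Type*} [NormedAddCommGroup E] [InnerProductSpace ℝ E] [FiniteDimensional ℝ E]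
    (σ : Set E) (hσ : IsConvexCone σ) (V : Finset E) (hV : V.Nonempty)
    (Δ : Set E) (hΔ : Δ = convexHull ℝ (V : Set E) + σ)
    (δ : Set (ℝ × E)) (hδ : δ = homog σ Δ) :
    ∀ (r : ℝ) (u : E), (r, u) ∈ dualConeProd δ ↔
      u ∈ dualCone σ ∧ ∀ v ∈ Δ, 0 ≤ r + ⟪u, v⟫ := by
  intro r u
  subst hδ
  constructor
  · intro h
    have key : ∀ q ∈ ((({0} : Set ℝ) ×ˢ σ) ∪ (({1} : Set ℝ) ×ˢ Δ)),
        0 ≤ r * q.1 + ⟪u, q.2⟫ := by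
      intro q hq
      exact h q ⟨1, fun _ => 1, fun _ => q, fun _ => zero_le_one, fun _ => hq, by simp⟩
    refine ⟨fun v hv => ?_, fun v hv => ?_⟩
    · have := key (0, v) (Or.inl ⟨rfl, hv⟩)
      simpa using this
    · have := key (1, v) (Or.inr ⟨rfl, hv⟩)
      simpa using this
  · rintro ⟨h1, h2⟩ q ⟨n, c, v, hc, hv, rfl⟩
    have e : r * (∑ i, c i • v i).1 + ⟪u, (∑ i, c i • v i).2⟫
        = ∑ i, c i * (r * (v i).1 + ⟪u, (v i).2⟫) := by
      rw [Prod.fst_sum, Prod.snd_sum, inner_sum, Finset.mul_sum, ← Finset.sum_add_distrib]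
      refine Finset.sum_congr rfl fun i _ => ?_
      simp only [Prod.smul_fst, Prod.smul_snd, smul_eq_mul, real_inner_smul_right]
      ring
    change 0 ≤ r * (∑ i, c i • v i).1 + ⟪u, (∑ i, c i • v i).2⟫
    rw [e]
    refine Finset.sum_nonneg fun i _ => mul_nonneg (hc i) ?_
    rcases hv i with ⟨ha, hb⟩ | ⟨ha, hb⟩
    · rw [Set.mem_singleton_iff.mp ha, mul_zero, zero_add]
      exact h1 _ hb
    · rw [Set.mem_singleton_iff.mp ha, mul_one]
      exact h2 _ hb
end

section
/- Let σ ⊆ E be a convex cone, V ⊆ E a finite nonempty set, Δ = convexHull(V) + σ, and let δ ⊆ ℝ × E be the homogenization of Δ. Then for every pair (r,u) ∈ ℝ × E, we have (r,u) ∈ δ* if and only if u ∈ σ* and r ≥ −min_{v ∈ V} ⟪u,v⟫ (the minimum taken over the finite set V). -/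
open scoped RealInnerProductSpace Pointwise

/-- `(r,u) ∈ δ*` iff `u ∈ σ*` and `r ≥ -min_{v ∈ V} ⟪u,v⟫`. -/
theorem dual_of_homogenization_min
    {E : Type*} [NormedAddCommGroup E] [InnerProductSpace ℝ E] [FiniteDimensional ℝ E]
    (σ : Set E) (hσ : IsConvexCone σ) (V : Finset E) (hV : V.Nonempty)
    (Δ : Set E) (hΔ : Δ = convexHull ℝ (V : Set E) + σ)
    (δ : Set (ℝ × E)) (hδ : δ = homog σ Δ) :
    ∀ (r : ℝ) (u : E), (r, u) ∈ dualConeProd δ ↔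
      u ∈ dualCone σ ∧ -(V.inf' hV fun v => ⟪u, v⟫) ≤ r := by
  subst hΔ hδ
  intro r u
  constructor
  · intro h
    have gen : ∀ q ∈ ((({0} : Set ℝ) ×ˢ σ) ∪ (({1} : Set ℝ) ×ˢ (convexHull ℝ (V : Set E) + σ))),
        0 ≤ r * q.1 + ⟪u, q.2⟫ := by
      intro q hq
      exact h q ⟨1, fun _ => 1, fun _ => q, by simp, by intro _; exact hq, by simp⟩
    refine ⟨fun v hv => ?_, ?_⟩
    · simpa using gen (0, v) (Or.inl ⟨rfl, hv⟩)
    · obtain ⟨v, hv, hmin⟩ := Finset.exists_mem_eq_inf' hV (fun v => ⟪u, v⟫)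
      rw [hmin]
      have h1 := gen (1, v) (Or.inr ⟨rfl, Set.mem_add.2
        ⟨v, subset_convexHull ℝ _ hv, 0, hσ.1, add_zero v⟩⟩)
      simp only [mul_one] at h1
      linarith
  · rintro ⟨hu, hr⟩ q ⟨n, c, w, hc, hw, rfl⟩
    have hull : convexHull ℝ (V : Set E) ⊆ {x | -r ≤ ⟪u, x⟫} := by
      apply convexHull_min
      · intro v hv
        have h1 : (V.inf' hV fun v => ⟪u, v⟫) ≤ ⟪u, v⟫ :=
          Finset.inf'_le (fun v => ⟪u, v⟫) hv
        simp only [Set.mem_setOf_eq]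
        linarith
      · exact convex_halfSpace_ge (innerₛₗ ℝ u).isLinear (-r)
    have key : ∀ i, 0 ≤ r * (w i).1 + ⟪u, (w i).2⟫ := by
      intro i
      rcases hw i with ⟨h1, h2⟩ | ⟨h1, h2⟩
      · rw [Set.mem_singleton_iff.1 h1]
        simpa using hu _ h2
      · rw [Set.mem_singleton_iff.1 h1]
        obtain ⟨a, ha, b, hb, hab⟩ := Set.mem_add.1 h2
        rw [← hab, inner_add_right]
        have h3 : -r ≤ ⟪u, a⟫ := hull ha
        have h4 := hu b hb
        linarith
    have e : r * (∑ i, c i • w i).1 + ⟪u, (∑ i, c i • w i).2⟫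
        = ∑ i, c i * (r * (w i).1 + ⟪u, (w i).2⟫) := by
      rw [Prod.fst_sum, Prod.snd_sum, inner_sum, Finset.mul_sum, ← Finset.sum_add_distrib]
      refine Finset.sum_congr rfl fun i _ => ?_
      simp only [Prod.smul_fst, Prod.smul_snd, inner_smul_right, smul_eq_mul]
      ring
    show 0 ≤ r * (∑ i, c i • w i).1 + ⟪u, (∑ i, c i • w i).2⟫
    rw [e]
    exact Finset.sum_nonneg fun i _ => mul_nonneg (hc i) (key i)
end

section
/- Let G ⊆ E be a finite set, let σ be the convex cone generated by G (the set of finite nonnegative linear combinations of elements of G), let V ⊆ E be a finite nonempty set, and let Δ = convexHull(V) + σ. Then the homogenization δ of Δ equals the convex cone in ℝ × E generated by the finite set ({0} × G) ∪ ({1} × V); in particular δ is a finitely generated (polyhedral) cone. -/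
open scoped RealInnerProductSpace Pointwise

theorem coneGen_add_mem {E : Type*} [AddCommMonoid E] [Module ℝ E] {T : Set E} {x y : E}
    (hx : x ∈ coneGen T) (hy : y ∈ coneGen T) : x + y ∈ coneGen T := by
  obtain ⟨n, c, v, hc, hv, rfl⟩ := hx
  obtain ⟨m, d, w, hd, hw, rfl⟩ := hy
  refine ⟨n + m, Fin.append c d, Fin.append v w, ?_, ?_, ?_⟩
  · intro i
    refine Fin.addCases (fun i => ?_) (fun i => ?_) i
    · simpa using hc i
    · simpa using hd i
  · intro i
    refine Fin.addCases (fun i => ?_) (fun i => ?_) i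
    · simpa using hv i
    · simpa using hw i
  · simp [Fin.sum_univ_add]

theorem coneGen_smul_mem {E : Type*} [AddCommMonoid E] [Module ℝ E] {T : Set E} {x : E}
    {a : ℝ} (ha : 0 ≤ a) (hx : x ∈ coneGen T) : a • x ∈ coneGen T := by
  obtain ⟨n, c, v, hc, hv, rfl⟩ := hx
  exact ⟨n, fun i => a * c i, v, fun i => mul_nonneg ha (hc i), hv, by
    simp [Finset.smul_sum, mul_smul]⟩

theorem coneGen_zero_mem {E : Type*} [AddCommMonoid E] [Module ℝ E] {T : Set E} :
    (0 : E) ∈ coneGen T :=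
  ⟨0, fun _ => 0, fun _ => 0, fun _ => le_rfl, fun i => i.elim0, by simp⟩

theorem subset_coneGen {E : Type*} [AddCommMonoid E] [Module ℝ E] {T : Set E} :
    T ⊆ coneGen T :=
  fun x hx => ⟨1, fun _ => 1, fun _ => x, fun _ => zero_le_one, fun _ => hx, by simp⟩

theorem coneGen_subset {E : Type*} [AddCommMonoid E] [Module ℝ E] {T C : Set E}
    (hC : IsConvexCone C) (h : T ⊆ C) : coneGen T ⊆ C := by
  rintro _ ⟨n, c, v, hc, hv, rfl⟩
  exact Finset.sum_induction _ (· ∈ C) (fun a b ha hb => hC.2.1 a ha b hb) hC.1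
    (fun i _ => hC.2.2 _ (hc i) _ (h (hv i)))

theorem isConvexCone_coneGen {E : Type*} [AddCommMonoid E] [Module ℝ E] (T : Set E) :
    IsConvexCone (coneGen T) :=
  ⟨coneGen_zero_mem, fun _ hx _ hy => coneGen_add_mem hx hy,
    fun _ ha _ hx => coneGen_smul_mem ha hx⟩

/-- if `σ` is generated by the finite set `G`, then the
homogenization of `Δ = conv(V) + σ` is the cone generated by
`({0} × G) ∪ ({1} × V)`; in particular it is finitely generated. -/
theorem homogenization_finitely_generated
    {E : Type*} [NormedAddCommGroup E] [InnerProductSpace ℝ E] [FiniteDimensional ℝ E]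
    (G : Finset E) (σ : Set E) (hσ : σ = coneGen (G : Set E))
    (V : Finset E) (hV : V.Nonempty)
    (Δ : Set E) (hΔ : Δ = convexHull ℝ (V : Set E) + σ) :
    homog σ Δ =
      coneGen ((({0} : Set ℝ) ×ˢ (G : Set E)) ∪ (({1} : Set ℝ) ×ˢ (V : Set E))) := by
  subst hσ hΔ
  apply Set.Subset.antisymm
  · set T := (({0} : Set ℝ) ×ˢ (G : Set E)) ∪ (({1} : Set ℝ) ×ˢ (V : Set E)) with hT
    have h0 : ∀ x ∈ coneGen (G : Set E), ((0 : ℝ), x) ∈ coneGen T := by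
      refine coneGen_subset (C := {x | ((0 : ℝ), x) ∈ coneGen T}) ⟨?_, ?_, ?_⟩ ?_
      · exact coneGen_zero_mem
      · intro x hx y hy
        simpa using coneGen_add_mem (Set.mem_setOf.1 hx) (Set.mem_setOf.1 hy)
      · intro c hc x hx
        simpa using coneGen_smul_mem hc (Set.mem_setOf.1 hx)
      · intro x hx
        exact subset_coneGen (Or.inl ⟨rfl, hx⟩)
    have h1 : ∀ x ∈ convexHull ℝ (V : Set E), ((1 : ℝ), x) ∈ coneGen T := by
      refine convexHull_min (t := {x | ((1 : ℝ), x) ∈ coneGen T}) ?_ ?_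
      · intro x hx
        exact subset_coneGen (Or.inr ⟨rfl, hx⟩)
      · intro x hx y hy a b ha hb hab
        have := coneGen_add_mem (coneGen_smul_mem ha (Set.mem_setOf.1 hx))
          (coneGen_smul_mem hb (Set.mem_setOf.1 hy))
        simpa [hab] using this
    refine coneGen_subset (isConvexCone_coneGen T) ?_
    rintro ⟨r, x⟩ (⟨hr, hx⟩ | ⟨hr, hx⟩)
    · obtain rfl : r = 0 := hr
      exact h0 x hx
    · obtain rfl : r = 1 := hr
      obtain ⟨y, hy, z, hz, rfl⟩ := hx
      simpa using coneGen_add_mem (h1 y hy) (h0 z hz)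
  · refine coneGen_subset (isConvexCone_coneGen _) ?_
    rintro ⟨r, x⟩ (⟨hr, hx⟩ | ⟨hr, hx⟩)
    · exact subset_coneGen (Or.inl ⟨hr, subset_coneGen hx⟩)
    · exact subset_coneGen (Or.inr ⟨hr, x, subset_convexHull ℝ _ hx, 0, coneGen_zero_mem,
        add_zero x⟩)
end

section
/- Let σ ⊆ E be a convex cone, V ⊆ E a finite nonempty set, Δ = convexHull(V) + σ, and let δ ⊆ ℝ × E be the homogenization of Δ. Then δ is pointed if and only if σ is pointed; that is, δ ∩ (−δ) = {(0,0)} if and only if σ ∩ (−σ) = {0}. -/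
open scoped RealInnerProductSpace Pointwise

/-- Elements of the homogenization have nonnegative height, and those of height `0` lie in `σ`. -/
theorem homog_mem_aux {E : Type*} [AddCommGroup E] [Module ℝ E] {σ Δ : Set E}
    (hσ : IsConvexCone σ) {p : ℝ × E} (hp : p ∈ homog σ Δ) :
    0 < p.1 ∨ (p.1 = 0 ∧ p.2 ∈ σ) := by
  obtain ⟨h0, hadd, hsmul⟩ := hσ
  obtain ⟨n, c, v, hc, hv, rfl⟩ := hp
  refine Finset.sum_induction (fun i => c i • v i)
    (fun p : ℝ × E => 0 < p.1 ∨ (p.1 = 0 ∧ p.2 ∈ σ)) ?_ ?_ ?_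
  · rintro a b (ha | ⟨ha, ha2⟩) (hb | ⟨hb, hb2⟩)
    · left; rw [Prod.fst_add]; linarith
    · left; rw [Prod.fst_add]; linarith
    · left; rw [Prod.fst_add]; linarith
    · right; exact ⟨by rw [Prod.fst_add]; linarith, hadd _ ha2 _ hb2⟩
  · exact Or.inr ⟨rfl, h0⟩
  · intro i _
    rcases (hc i).eq_or_lt with h | h
    · right
      simp [← h, h0]
    · rcases hv i with ⟨h1, h2⟩ | ⟨h1, h2⟩
      · right
        have h1' : (v i).1 = 0 := h1
        exact ⟨by simp [h1'], hsmul _ h.le _ h2⟩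
      · left
        have h1' : (v i).1 = 1 := h1
        simpa [h1'] using h

theorem mem_homog_of_mem {E : Type*} [AddCommGroup E] [Module ℝ E] {σ Δ : Set E}
    {x : E} (hx : x ∈ σ) : ((0 : ℝ), x) ∈ homog σ Δ :=
  ⟨1, fun _ => 1, fun _ => (0, x), fun _ => zero_le_one, fun _ => Or.inl ⟨rfl, hx⟩, by simp⟩

/-- the homogenization `δ` is pointed iff `σ` is pointed. -/
theorem homogenization_pointed_iff
    {E : Type*} [NormedAddCommGroup E] [InnerProductSpace ℝ E] [FiniteDimensional ℝ E]
    (σ : Set E) (hσ : IsConvexCone σ) (V : Finset E) (hV : V.Nonempty)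
    (Δ : Set E) (hΔ : Δ = convexHull ℝ (V : Set E) + σ)
    (δ : Set (ℝ × E)) (hδ : δ = homog σ Δ) :
    δ ∩ (-δ) = {(0 : ℝ × E)} ↔ σ ∩ (-σ) = {(0 : E)} := by
  subst hδ
  have h0 := hσ.1
  constructor
  · intro h
    ext x
    simp only [Set.mem_inter_iff, Set.mem_neg, Set.mem_singleton_iff]
    constructor
    · rintro ⟨hx, hx'⟩
      have : ((0 : ℝ), x) ∈ homog σ Δ ∩ (-homog σ Δ) :=
        ⟨mem_homog_of_mem hx, by
          simpa [Set.mem_neg] using mem_homog_of_mem (Δ := Δ) hx'⟩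
      rw [h] at this
      exact congrArg Prod.snd this
    · rintro rfl
      simpa using h0
  · intro h
    ext p
    simp only [Set.mem_inter_iff, Set.mem_neg, Set.mem_singleton_iff]
    constructor
    · rintro ⟨hp, hp'⟩
      have h1 := homog_mem_aux hσ hp
      have h2 := homog_mem_aux hσ hp'
      simp only [Prod.fst_neg, Prod.snd_neg] at h2
      have h3 : p.1 = 0 ∧ p.2 ∈ σ ∧ -p.2 ∈ σ := by
        rcases h1 with h1 | ⟨h1, h1'⟩ <;> rcases h2 with h2 | ⟨h2, h2'⟩
        · linarith
        · linarith
        · linarith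
        · exact ⟨h1, h1', h2'⟩
      have h4 : p.2 ∈ σ ∩ (-σ) := ⟨h3.2.1, h3.2.2⟩
      rw [h] at h4
      exact Prod.ext h3.1 h4
    · rintro rfl
      have := mem_homog_of_mem (Δ := Δ) h0
      rw [neg_zero]
      exact ⟨this, this⟩
end

section
/- Let σ ⊆ E be a closed convex cone, V ⊆ E a finite nonempty set, and Δ = convexHull(V) + σ. Then Δ is recovered from its support function on the dual cone: Δ = {x ∈ E : for every u ∈ σ*, ⟪u,x⟫ ≥ min_{v ∈ V} ⟪u,v⟫}. -/
open scoped RealInnerProductSpace Pointwise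

/-- `Δ = conv(V) + σ` is recovered from its support function on
the dual cone `σ*`. -/
theorem polyhedron_eq_halfspace_intersection
    {E : Type*} [NormedAddCommGroup E] [InnerProductSpace ℝ E] [FiniteDimensional ℝ E]
    (σ : Set E) (hσ : IsConvexCone σ) (hσc : IsClosed σ)
    (V : Finset E) (hV : V.Nonempty)
    (Δ : Set E) (hΔ : Δ = convexHull ℝ (V : Set E) + σ) :
    Δ = {x : E | ∀ u ∈ dualCone σ, (V.inf' hV fun v => ⟪u, v⟫) ≤ ⟪u, x⟫} := by
  subst hΔ
  obtain ⟨h0, hadd, hsmul⟩ := hσ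
  have hconvσ : Convex ℝ σ := by
    intro x hx y hy a b ha hb _
    exact hadd _ (hsmul a ha x hx) _ (hsmul b hb y hy)
  have hcpt : IsCompact (convexHull ℝ (V : Set E)) := V.finite_toSet.isCompact_convexHull ℝ
  have hclosed : IsClosed (convexHull ℝ (V : Set E) + σ) := hσc.add_left_of_isCompact hcpt
  have hconv : Convex ℝ (convexHull ℝ (V : Set E) + σ) := (convex_convexHull ℝ _).add hconvσ
  ext x
  constructor
  · rintro ⟨p, hp, s, hs, rfl⟩ u hu
    have hhalf : Convex ℝ {y : E | (V.inf' hV fun v => ⟪u, v⟫) ≤ ⟪u, y⟫} :=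
      convex_halfSpace_ge (innerSL ℝ u).toLinearMap.isLinear _
    have h1 : p ∈ {y : E | (V.inf' hV fun v => ⟪u, v⟫) ≤ ⟪u, y⟫} := by
      refine convexHull_min ?_ hhalf hp
      intro v hv
      exact Finset.inf'_le (fun v => ⟪u, v⟫) hv
    have h2 := hu s hs
    simp only [Set.mem_setOf_eq] at h1
    show _ ≤ ⟪u, p + s⟫
    rw [inner_add_right]
    linarith
  · intro hx
    by_contra hnot
    obtain ⟨f, c, hfx, hf⟩ := geometric_hahn_banach_point_closed hconv hclosed hnot
    haveI : CompleteSpace E := FiniteDimensional.complete ℝ E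
    set u := (InnerProductSpace.toDual ℝ E).symm f with hu
    have hfu : ∀ y, ⟪u, y⟫ = f y := fun y => InnerProductSpace.toDual_symm_apply
    have hmem : u ∈ dualCone σ := by
      intro s hs
      by_contra hneg
      push Not at hneg
      rw [hfu] at hneg
      obtain ⟨v, hv⟩ := hV
      obtain ⟨n, hn⟩ := exists_nat_gt ((f v - c) / (-f s))
      have h3 := hf (v + (n : ℝ) • s)
        (Set.add_mem_add (subset_convexHull ℝ _ hv) (hsmul n n.cast_nonneg s hs))
      rw [div_lt_iff₀ (by linarith)] at hn
      simp only [map_add, map_smul, smul_eq_mul] at h3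
      linarith
    have h4 := hx u hmem
    obtain ⟨v, hv, hve⟩ := Finset.exists_mem_eq_inf' hV (fun v => ⟪u, v⟫)
    rw [hve, hfu, hfu] at h4
    have h5 := hf (v + 0) (Set.add_mem_add (subset_convexHull ℝ _ hv) h0)
    rw [add_zero] at h5
    linarith
end

section
/- Let σ ⊆ E be a closed convex cone and for i = 1,2,3 let Δᵢ = convexHull(Vᵢ) + σ with Vᵢ ⊆ E finite and nonempty. If Δ₁ + Δ₃ = Δ₂ + Δ₃ (Minkowski sums), then Δ₁ = Δ₂. (Hence Minkowski addition on the semigroup Pol⁺_σ of polyhedra with tail cone σ is cancellative, so Pol⁺_σ embeds into its group of differences Pol_σ.) -/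
open scoped RealInnerProductSpace Pointwise

theorem minkowski_cancel_aux
    {E : Type*} [NormedAddCommGroup E] [InnerProductSpace ℝ E] [FiniteDimensional ℝ E]
    (σ : Set E) (hσ : IsConvexCone σ) (hσc : IsClosed σ)
    (V₁ V₂ V₃ : Finset E) (hV₂ : V₂.Nonempty) (hV₃ : V₃.Nonempty)
    (h : (convexHull ℝ (V₁ : Set E) + σ) + (convexHull ℝ (V₃ : Set E) + σ)
      ⊆ (convexHull ℝ (V₂ : Set E) + σ) + (convexHull ℝ (V₃ : Set E) + σ)) :
    convexHull ℝ (V₁ : Set E) + σ ⊆ convexHull ℝ (V₂ : Set E) + σ := by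
  obtain ⟨h0, hadd, hsmul⟩ := hσ
  intro x hx
  by_contra hx2
  have hconv : Convex ℝ σ := fun a ha b hb s t hs ht _ =>
    hadd _ (hsmul s hs a ha) _ (hsmul t ht b hb)
  obtain ⟨f, u, hfx, hf⟩ := geometric_hahn_banach_point_closed
    ((convex_convexHull ℝ (V₂ : Set E)).add hconv)
    (hσc.add_left_of_isCompact (V₂.finite_toSet.isCompact_convexHull ℝ)) hx2
  have hpos : ∀ s ∈ σ, 0 ≤ f s := by
    intro s hs
    by_contra! hneg
    obtain ⟨v, hv⟩ := hV₂
    have hv' : v ∈ convexHull ℝ (V₂ : Set E) := subset_convexHull ℝ _ hv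
    have h1 := hf _ (Set.add_mem_add hv' h0)
    rw [add_zero] at h1
    have hc : 0 ≤ (f v - u) / (-f s) := div_nonneg (by linarith) (by linarith)
    have h2 := hf _ (Set.add_mem_add hv' (hsmul _ hc s hs))
    rw [map_add, map_smul, smul_eq_mul] at h2
    have h3 : (f v - u) / (-f s) * f s = -(f v - u) := by
      have hne : f s ≠ 0 := hneg.ne
      field_simp
    linarith
  obtain ⟨m, hm, hmin⟩ := (V₃.finite_toSet.isCompact_convexHull ℝ).exists_isMinOn
    (hV₃.to_set.convexHull (𝕜 := ℝ)) f.continuous.continuousOn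
  obtain ⟨b, hb, c, ⟨k, hk, s, hs, rfl⟩, hbc⟩ := h (Set.add_mem_add hx (Set.add_mem_add hm h0))
  have h1 := congrArg f hbc
  simp only [map_add, map_zero] at h1
  have h2 := hf b hb
  have h3 := hpos s hs
  have h4 : f m ≤ f k := hmin hk
  linarith

/-- Minkowski addition of polyhedra with tail cone `σ` is
cancellative: `Δ₁ + Δ₃ = Δ₂ + Δ₃` implies `Δ₁ = Δ₂`. -/
theorem minkowski_cancellation
    {E : Type*} [NormedAddCommGroup E] [InnerProductSpace ℝ E] [FiniteDimensional ℝ E]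
    (σ : Set E) (hσ : IsConvexCone σ) (hσc : IsClosed σ)
    (V₁ V₂ V₃ : Finset E) (hV₁ : V₁.Nonempty) (hV₂ : V₂.Nonempty) (hV₃ : V₃.Nonempty)
    (Δ₁ Δ₂ Δ₃ : Set E)
    (hΔ₁ : Δ₁ = convexHull ℝ (V₁ : Set E) + σ)
    (hΔ₂ : Δ₂ = convexHull ℝ (V₂ : Set E) + σ)
    (hΔ₃ : Δ₃ = convexHull ℝ (V₃ : Set E) + σ)
    (h : Δ₁ + Δ₃ = Δ₂ + Δ₃) :
    Δ₁ = Δ₂ := by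
  subst hΔ₁ hΔ₂ hΔ₃
  exact Set.Subset.antisymm
    (minkowski_cancel_aux σ hσ hσc V₁ V₂ V₃ hV₂ hV₃ h.subset)
    (minkowski_cancel_aux σ hσ hσc V₂ V₁ V₃ hV₁ hV₃ h.symm.subset)
end
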